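/- Memoization-table lookups are bounded by in-degree for Memo (Lemma 5): For every run s of an execution of Memo, every state q ∈ Q, and every position i ∈ {0, …, |w|}, the element M(q, i) appears at most #in(q) − 1 times in s. -/

import Mathlib

namespace RegexMemo

/-! ## Generic runs, `φ`, `sub`, `sub*` -/

variable {α : Type}

/-- `φ_s(ℓ, n)`: the index of the result value of the call at index `ℓ`. -/
def phiAux (isRet : α → Bool) (s : List α) (ℓ n : ℕ) : Option ℕ :=
  match h : s[ℓ]? with
  | none => none
  | some e =>
    if isRet e then
      if n ≤ 1 then some ℓ
      else phiAux isRet s (ℓ + 1) (n - 1)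
    else phiAux isRet s (ℓ + 1) (n + 1)
termination_by s.length - ℓ
decreasing_by
  all_goals
    have hl : ℓ < s.length := by
      by_contra hc
      have : s[ℓ]? = none := List.getElem?_eq_none (by omega)
      simp [this] at h
    omega

/-- `φ_s(ℓ) = φ_s(ℓ, 0)`. -/
def phi (isRet : α → Bool) (s : List α) (ℓ : ℕ) : Option ℕ := phiAux isRet s ℓ 0

/-- `sub(s, ℓ)`: replace the memoization-table invocation at index `ℓ` (an element
`M(q,i)` together with its immediately following result) by `C(q,i)` followed by the
subsequence `s[ℓ'+1] … s[φ_s(ℓ')]`, where `ℓ'` is the first index with `s[ℓ'] = C(q,i)`.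
Here `m2c` maps a memoization element `M(q,i)` to the corresponding call element `C(q,i)`
(and everything else to `none`), and `isRet` recognizes result elements. -/
def subExpand [DecidableEq α] (m2c : α → Option α) (isRet : α → Bool)
    (s : List α) (ℓ : ℕ) : Option (List α) :=
  match s[ℓ]? with
  | some e =>
    match m2c e with
    | some c =>
      match s.findIdx? (· == c) with
      | some ℓ' =>
        match phi isRet s ℓ' with
        | some m =>
          some (s.take ℓ ++ [c] ++ ((s.drop (ℓ' + 1)).take (m - ℓ')) ++ s.drop (ℓ + 2))
        | none => none
      | none => none
    | none => none
  | none => none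

/-- `sub*`: repeatedly locate the first memoization element and expand it,
until no memoization element remains. `SubStar m2c isRet s t` means `sub*(s) = t`. -/
inductive SubStar [DecidableEq α] (m2c : α → Option α) (isRet : α → Bool) :
    List α → List α → Prop where
  | done {s : List α} : s.findIdx? (fun e => (m2c e).isSome) = none →
      SubStar m2c isRet s s
  | step {s s' t : List α} {ℓ : ℕ} :
      s.findIdx? (fun e => (m2c e).isSome) = some ℓ →
      subExpand m2c isRet s ℓ = some s' →
      SubStar m2c isRet s' t →
      SubStar m2c isRet s t

/-- The number of (recursive) calls recorded in a run: the number of `C`/`M` elements. -/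
def callCount (isCall : α → Bool) (s : List α) : ℕ := (s.filter isCall).length

variable {Sigma S : Type}

/-- Results of backtracking matching: `SuccessAt i'` or `Failure`. -/
inductive Result : Type where
  | successAt : ℕ → Result
  | failure : Result
deriving DecidableEq

/-! ## Plain NFAs -/

/-- Transitions of a plain NFA. -/
inductive Trans (Sigma S : Type) : Type where
  | eps : S → Trans Sigma S
  | branch : S → S → Trans Sigma S
  | char : Sigma → S → Trans Sigma S

/-- A (plain) NFA over the alphabet `Sigma` with (finite) state type `S`:
an initial state, a set of accepting states, and a transition function
(whose value is only relevant on non-accepting states). -/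
structure NFA (Sigma S : Type) where
  q0 : S
  F : Set S
  T : S → Trans Sigma S

/-- One ε-step: an `Eps` or `Branch` transition of a non-accepting state. -/
def NFA.epsStep (A : NFA Sigma S) (q q' : S) : Prop :=
  q ∉ A.F ∧ (A.T q = Trans.eps q' ∨ (∃ q'', A.T q = Trans.branch q' q'') ∨
    (∃ q'', A.T q = Trans.branch q'' q'))

/-- The NFA has no ε-loops. -/
def NFA.NoEpsLoops (A : NFA Sigma S) : Prop :=
  ∀ q : S, ¬ Relation.TransGen A.epsStep q q

open Classical in
/-- The in-degree `#in(q)` of a state of a plain NFA. -/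
noncomputable def NFA.inDeg [Fintype S] (A : NFA Sigma S) (q : S) : ℕ :=
  (Finset.univ.filter fun q' : S => q' ∉ A.F ∧ A.T q' = Trans.eps q).card +
  (Finset.univ.filter fun q' : S => q' ∉ A.F ∧ ∃ σ, A.T q' = Trans.char σ q).card +
  (Finset.univ.filter fun q' : S => q' ∉ A.F ∧ ∃ q'', A.T q' = Trans.branch q q'').card +
  (Finset.univ.filter fun q' : S => q' ∉ A.F ∧ ∃ q'', A.T q' = Trans.branch q'' q).card +
  (if q = A.q0 then 1 else 0)

/-- The maximal in-degree `#in(A)` of a plain NFA. -/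
noncomputable def NFA.inDegMax [Fintype S] (A : NFA Sigma S) : ℕ :=
  Finset.univ.sup fun q : S => A.inDeg q

/-- Elements of runs of `Match`/`Memo`: calls `C(q,i)`, memoization-table invocations
`M(q,i)`, and results `S(i')` and `F`. -/
inductive RunElem (S : Type) : Type where
  | call : S → ℕ → RunElem S
  | memo : S → ℕ → RunElem S
  | succ : ℕ → RunElem S
  | fail : RunElem S
deriving DecidableEq

/-- The run element recording the return of a result. -/
def Result.elem {S : Type} : Result → RunElem S
  | .successAt i => .succ i
  | .failure => .fail

def RunElem.isRet : RunElem S → Bool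
  | .succ _ => true
  | .fail => true
  | _ => false

def RunElem.isCall : RunElem S → Bool
  | .call _ _ => true
  | .memo _ _ => true
  | _ => false

/-- `M(q,i) ↦ C(q,i)`. -/
def memoToCall : RunElem S → Option (RunElem S)
  | .memo q i => some (.call q i)
  | _ => none

/-- Big-step semantics (together with the produced run) of the backtracking
matching algorithm `Match` for plain NFAs:
`MatchRun A w q i r s` means the call `Match_{A,w}(q, i)` terminates with
result `r` and produces the run `s`. -/
inductive MatchRun (A : NFA Sigma S) (w : List Sigma) :
    S → ℕ → Result → List (RunElem S) → Prop where
  | accept {q : S} {i : ℕ} : q ∈ A.F →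
      MatchRun A w q i (.successAt i) [.call q i, .succ i]
  | eps {q q' : S} {i : ℕ} {r : Result} {s : List (RunElem S)} :
      q ∉ A.F → A.T q = Trans.eps q' →
      MatchRun A w q' i r s →
      MatchRun A w q i r (.call q i :: s ++ [r.elem])
  | branchSucc {q q' q'' : S} {i i' : ℕ} {s : List (RunElem S)} :
      q ∉ A.F → A.T q = Trans.branch q' q'' →
      MatchRun A w q' i (.successAt i') s →
      MatchRun A w q i (.successAt i') (.call q i :: s ++ [RunElem.succ i'])
  | branchFail {q q' q'' : S} {i : ℕ} {r : Result} {s s' : List (RunElem S)} :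
      q ∉ A.F → A.T q = Trans.branch q' q'' →
      MatchRun A w q' i .failure s →
      MatchRun A w q'' i r s' →
      MatchRun A w q i r (.call q i :: s ++ s' ++ [r.elem])
  | charSucc {q q' : S} {σ : Sigma} {i : ℕ} {r : Result} {s : List (RunElem S)} :
      q ∉ A.F → A.T q = Trans.char σ q' →
      w[i]? = some σ →
      MatchRun A w q' (i + 1) r s →
      MatchRun A w q i r (.call q i :: s ++ [r.elem])
  | charFail {q q' : S} {σ : Sigma} {i : ℕ} :
      q ∉ A.F → A.T q = Trans.char σ q' →
      w[i]? ≠ some σ →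
      MatchRun A w q i .failure [.call q i, .fail]

/-- Record `M(q,i) := Failure` in the memoization table if the result is a failure. -/
def recFail [DecidableEq S] (M : S × ℕ → Bool) (q : S) (i : ℕ) : Result → (S × ℕ → Bool)
  | .failure => fun p => if p = (q, i) then true else M p
  | _ => M

/-- Big-step semantics (with resulting memoization table and produced run) of the
memoized backtracking matching algorithm `Memo` for plain NFAs:
`MemoRun A w q i M M' r s` means the call `Memo^M_{A,w}(q, i)` terminates with result
`r`, final memoization table `M'` (where `M p = true` means `Failure` is recorded at the
key `p`), and produces the run `s`. -/
inductive MemoRun [DecidableEq S] (A : NFA Sigma S) (w : List Sigma) :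
    S → ℕ → (S × ℕ → Bool) → (S × ℕ → Bool) → Result → List (RunElem S) → Prop where
  | memoHit {q : S} {i : ℕ} {M : S × ℕ → Bool} : M (q, i) = true →
      MemoRun A w q i M M .failure [.memo q i, .fail]
  | accept {q : S} {i : ℕ} {M : S × ℕ → Bool} : M (q, i) = false → q ∈ A.F →
      MemoRun A w q i M M (.successAt i) [.call q i, .succ i]
  | eps {q q' : S} {i : ℕ} {M M' : S × ℕ → Bool} {r : Result} {s : List (RunElem S)} :
      M (q, i) = false → q ∉ A.F → A.T q = Trans.eps q' →
      MemoRun A w q' i M M' r s →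
      MemoRun A w q i M (recFail M' q i r) r (.call q i :: s ++ [r.elem])
  | branchSucc {q q' q'' : S} {i i' : ℕ} {M M' : S × ℕ → Bool} {s : List (RunElem S)} :
      M (q, i) = false → q ∉ A.F → A.T q = Trans.branch q' q'' →
      MemoRun A w q' i M M' (.successAt i') s →
      MemoRun A w q i M M' (.successAt i') (.call q i :: s ++ [RunElem.succ i'])
  | branchFail {q q' q'' : S} {i : ℕ} {M M' M'' : S × ℕ → Bool} {r : Result}
      {s s' : List (RunElem S)} :
      M (q, i) = false → q ∉ A.F → A.T q = Trans.branch q' q'' →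
      MemoRun A w q' i M M' .failure s →
      MemoRun A w q'' i M' M'' r s' →
      MemoRun A w q i M (recFail M'' q i r) r (.call q i :: s ++ s' ++ [r.elem])
  | charSucc {q q' : S} {σ : Sigma} {i : ℕ} {M M' : S × ℕ → Bool} {r : Result}
      {s : List (RunElem S)} :
      M (q, i) = false → q ∉ A.F → A.T q = Trans.char σ q' →
      w[i]? = some σ →
      MemoRun A w q' (i + 1) M M' r s →
      MemoRun A w q i M (recFail M' q i r) r (.call q i :: s ++ [r.elem])
  | charFail {q q' : S} {σ : Sigma} {i : ℕ} {M : S × ℕ → Bool} :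
      M (q, i) = false → q ∉ A.F → A.T q = Trans.char σ q' →
      w[i]? ≠ some σ →
      MemoRun A w q i M (recFail M q i .failure) .failure [.call q i, .fail]

/-! ## NFAs with sub-automata -/

/-- Kind labels of sub-automaton transitions: positive/negative look-ahead/look-behind
and atomic grouping. -/
inductive Kind : Type where
  | pla | nla | plb | nlb | at
deriving DecidableEq

mutual
/-- An NFA with sub-automata `⟨Q, q0, F, T⟩`: a list of top-level states, an initial
state, accepting states, and a transition function (relevant on non-accepting top-level
states) whose transitions may be labelled with further NFAs with sub-automata. -/
inductive SubNFA (Sigma S : Type) : Type where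
  | mk : List S → S → List S → (S → SubTrans Sigma S) → SubNFA Sigma S

/-- Transitions of an NFA with sub-automata. -/
inductive SubTrans (Sigma S : Type) : Type where
  | eps : S → SubTrans Sigma S
  | branch : S → S → SubTrans Sigma S
  | char : Sigma → S → SubTrans Sigma S
  | sub : Kind → SubNFA Sigma S → S → SubTrans Sigma S
end

/-- Top-level states `Q`. -/
def SubNFA.Q : SubNFA Sigma S → List S
  | .mk Q _ _ _ => Q

/-- Initial state `q0`. -/
def SubNFA.q0 : SubNFA Sigma S → S
  | .mk _ q0 _ _ => q0

/-- Accepting states `F`. -/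
def SubNFA.F : SubNFA Sigma S → List S
  | .mk _ _ F _ => F

/-- Transition function `T`. -/
def SubNFA.T : SubNFA Sigma S → S → SubTrans Sigma S
  | .mk _ _ _ T => T

mutual
/-- All automata occurring within an NFA with sub-automata (including itself), each
together with its nesting depth of atomic grouping (the number of enclosing
`at`-sub-automaton boundaries). -/
def SubNFA.compsD : SubNFA Sigma S → List (SubNFA Sigma S × ℕ)
  | .mk Q q0 F T => (.mk Q q0 F T, 0) :: Q.flatMap (fun q => SubTrans.subCompsD (T q))

def SubTrans.subCompsD : SubTrans Sigma S → List (SubNFA Sigma S × ℕ)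
  | .sub k A' _ => (SubNFA.compsD A').map (fun p => (p.1, p.2 + (if k = Kind.at then 1 else 0)))
  | _ => []
end

/-- All automata occurring within `A` (including `A` itself). -/
def SubNFA.comps (A : SubNFA Sigma S) : List (SubNFA Sigma S) :=
  A.compsD.map Prod.fst

/-- The set (list) of all states `P` occurring within `A`. -/
def SubNFA.allStates (A : SubNFA Sigma S) : List S :=
  A.comps.flatMap SubNFA.Q

/-- The nesting depth of atomic grouping `ν_A(q)` of a state `q` of `A`. -/
def SubNFA.nu [DecidableEq S] (A : SubNFA Sigma S) (q : S) : ℕ :=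
  (A.compsD.map (fun p => if q ∈ p.1.Q then p.2 else 0)).sum

/-- The maximal nesting depth of atomic grouping `ν(A)`. -/
def SubNFA.nuMax [DecidableEq S] (A : SubNFA Sigma S) : ℕ :=
  (A.allStates.map A.nu).foldr max 0

/-- Local wellformedness of one automaton: the initial state is a top-level state,
accepting states are top-level states, and transitions of non-accepting top-level
states lead to top-level states. -/
def SubNFA.LocalOK (B : SubNFA Sigma S) : Prop :=
  B.q0 ∈ B.Q ∧ (∀ f ∈ B.F, f ∈ B.Q) ∧ ∀ q ∈ B.Q, q ∉ B.F →
    match B.T q with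
    | .eps q' => q' ∈ B.Q
    | .branch q' q'' => q' ∈ B.Q ∧ q'' ∈ B.Q
    | .char _ q' => q' ∈ B.Q
    | .sub _ _ q' => q' ∈ B.Q

/-- Wellformedness of an NFA with sub-automata: every component automaton is locally
wellformed, and all the state lists are disjoint and duplicate-free (so that `P` is
the disjoint union of the top-level state sets of all components). -/
def SubNFA.WF (A : SubNFA Sigma S) : Prop :=
  (∀ B ∈ A.comps, B.LocalOK) ∧ A.allStates.Nodup

/-- The kind labels of all sub-automaton transitions occurring in `A`. -/
def SubNFA.kinds [DecidableEq S] (A : SubNFA Sigma S) : List Kind :=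
  A.comps.flatMap fun B =>
    (B.Q.filter (fun q => decide (q ∉ B.F))).filterMap fun q =>
      match B.T q with
      | .sub k _ _ => some k
      | _ => none

/-- A la-NFA: all kind labels are look-around labels (for simplicity, only positive
look-ahead `pla` is treated). -/
def SubNFA.IsLaNFA [DecidableEq S] (A : SubNFA Sigma S) : Prop :=
  ∀ k ∈ A.kinds, k = Kind.pla

/-- An at-NFA: all kind labels are `at` (atomic grouping). -/
def SubNFA.IsAtNFA [DecidableEq S] (A : SubNFA Sigma S) : Prop :=
  ∀ k ∈ A.kinds, k = Kind.at

/-- A (la,at)-NFA in which (for simplicity) only the kinds `pla` and `at` occur. -/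
def SubNFA.IsLaAtNFA [DecidableEq S] (A : SubNFA Sigma S) : Prop :=
  ∀ k ∈ A.kinds, k = Kind.pla ∨ k = Kind.at

/-- One global ε-step of an NFA with sub-automata: an `Eps` or `Branch` transition, or a
`Sub` transition with a look-around kind (from the transition's source to its successor),
of a non-accepting top-level state of any component automaton. -/
def SubNFA.epsStep (A : SubNFA Sigma S) (q q' : S) : Prop :=
  ∃ B ∈ A.comps, q ∈ B.Q ∧ q ∉ B.F ∧
    (B.T q = SubTrans.eps q' ∨
     (∃ q'', B.T q = SubTrans.branch q' q'') ∨
     (∃ q'', B.T q = SubTrans.branch q'' q') ∨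
     (∃ k A'', B.T q = SubTrans.sub k A'' q' ∧ k ≠ Kind.at))

/-- The NFA with sub-automata has no ε-loops. -/
def SubNFA.NoEpsLoops (A : SubNFA Sigma S) : Prop :=
  ∀ q : S, ¬ Relation.TransGen A.epsStep q q

/-- All pairs (state, transition) of non-accepting top-level states of all component
automata of `A`. -/
def SubNFA.allTransNF [DecidableEq S] (A : SubNFA Sigma S) : List (S × SubTrans Sigma S) :=
  A.comps.flatMap fun B => (B.Q.filter (fun q => decide (q ∉ B.F))).map fun q => (q, B.T q)

/-- How many of the buckets in the definition of the in-degree of `q` a given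
transition contributes to. -/
def SubTrans.hits [DecidableEq S] (t : SubTrans Sigma S) (q : S) : ℕ :=
  match t with
  | .eps q' => if q' = q then 1 else 0
  | .char _ q' => if q' = q then 1 else 0
  | .branch q' q'' => (if q' = q then 1 else 0) + (if q'' = q then 1 else 0)
  | .sub _ _ q' => if q' = q then 1 else 0

/-- The in-degree `#in(q)` of a state of an NFA with sub-automata. -/
def SubNFA.inDeg [DecidableEq S] (A : SubNFA Sigma S) (q : S) : ℕ :=
  (A.allTransNF.map (fun p => p.2.hits q)).sum +
  (if q ∈ A.comps.map SubNFA.q0 then 1 else 0)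

/-- The maximal in-degree `#in(A)`. -/
def SubNFA.inDegMax [DecidableEq S] (A : SubNFA Sigma S) : ℕ :=
  (A.allStates.map A.inDeg).foldr max 0

/-! ## run elements for `Memo-la` and `Match-(la,at)` -/

/-- Elements of runs of `Memo-la` (and of `Match-(la,at)`): calls `C(q,i)`,
memoization-table invocations `M(q,i)`, and the results `S(i')`, `S'` (bare success),
and `F`. -/
inductive LaRunElem (S : Type) : Type where
  | call : S → ℕ → LaRunElem S
  | memo : S → ℕ → LaRunElem S
  | succAt : ℕ → LaRunElem S
  | succ : LaRunElem S
  | fail : LaRunElem S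
deriving DecidableEq

def LaRunElem.isRet : LaRunElem S → Bool
  | .succAt _ => true
  | .succ => true
  | .fail => true
  | _ => false

def LaRunElem.isCall : LaRunElem S → Bool
  | .call _ _ => true
  | .memo _ _ => true
  | _ => false

def laMemoToCall : LaRunElem S → Option (LaRunElem S)
  | .memo q i => some (.call q i)
  | _ => none

def Result.laElem {S : Type} : Result → LaRunElem S
  | .successAt i => .succAt i
  | .failure => .fail

/-! ## The backtracking matching algorithm `Match-(la,at)` -/

/-- Big-step semantics (with produced run) of the backtracking matching algorithm
`Match-(la,at)` for NFAs with sub-automata: `LAMatchRun w A q i r s` means the call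
`Match-(la,at)_{A,w}(q, i)` terminates with result `r` and produces the run `s`.
For simplicity, only the look-around kind `pla` (besides `at`) is treated. -/
inductive LAMatchRun (w : List Sigma) :
    SubNFA Sigma S → S → ℕ → Result → List (LaRunElem S) → Prop where
  | accept {A : SubNFA Sigma S} {q : S} {i : ℕ} : q ∈ A.F →
      LAMatchRun w A q i (.successAt i) [.call q i, .succAt i]
  | eps {A : SubNFA Sigma S} {q q' : S} {i : ℕ} {r : Result} {s : List (LaRunElem S)} :
      q ∉ A.F → A.T q = SubTrans.eps q' →
      LAMatchRun w A q' i r s →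
      LAMatchRun w A q i r (.call q i :: s ++ [r.laElem])
  | branchSucc {A : SubNFA Sigma S} {q q' q'' : S} {i i' : ℕ} {s : List (LaRunElem S)} :
      q ∉ A.F → A.T q = SubTrans.branch q' q'' →
      LAMatchRun w A q' i (.successAt i') s →
      LAMatchRun w A q i (.successAt i') (.call q i :: s ++ [LaRunElem.succAt i'])
  | branchFail {A : SubNFA Sigma S} {q q' q'' : S} {i : ℕ} {r : Result}
      {s s' : List (LaRunElem S)} :
      q ∉ A.F → A.T q = SubTrans.branch q' q'' →
      LAMatchRun w A q' i .failure s →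
      LAMatchRun w A q'' i r s' →
      LAMatchRun w A q i r (.call q i :: s ++ s' ++ [r.laElem])
  | charSucc {A : SubNFA Sigma S} {q q' : S} {σ : Sigma} {i : ℕ} {r : Result}
      {s : List (LaRunElem S)} :
      q ∉ A.F → A.T q = SubTrans.char σ q' →
      w[i]? = some σ →
      LAMatchRun w A q' (i + 1) r s →
      LAMatchRun w A q i r (.call q i :: s ++ [r.laElem])
  | charFail {A : SubNFA Sigma S} {q q' : S} {σ : Sigma} {i : ℕ} :
      q ∉ A.F → A.T q = SubTrans.char σ q' →
      w[i]? ≠ some σ →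
      LAMatchRun w A q i .failure [.call q i, .fail]
  | plaSucc {A A' : SubNFA Sigma S} {q q' : S} {i i' : ℕ} {r : Result}
      {s1 s2 : List (LaRunElem S)} :
      q ∉ A.F → A.T q = SubTrans.sub Kind.pla A' q' →
      LAMatchRun w A' A'.q0 i (.successAt i') s1 →
      LAMatchRun w A q' i r s2 →
      LAMatchRun w A q i r (.call q i :: s1 ++ s2 ++ [r.laElem])
  | plaFail {A A' : SubNFA Sigma S} {q q' : S} {i : ℕ} {s1 : List (LaRunElem S)} :
      q ∉ A.F → A.T q = SubTrans.sub Kind.pla A' q' →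
      LAMatchRun w A' A'.q0 i .failure s1 →
      LAMatchRun w A q i .failure (.call q i :: s1 ++ [LaRunElem.fail])
  | atSucc {A A' : SubNFA Sigma S} {q q' : S} {i i' : ℕ} {r : Result}
      {s1 s2 : List (LaRunElem S)} :
      q ∉ A.F → A.T q = SubTrans.sub Kind.at A' q' →
      LAMatchRun w A' A'.q0 i (.successAt i') s1 →
      LAMatchRun w A q' i' r s2 →
      LAMatchRun w A q i r (.call q i :: s1 ++ s2 ++ [r.laElem])
  | atFail {A A' : SubNFA Sigma S} {q q' : S} {i : ℕ} {s1 : List (LaRunElem S)} :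
      q ∉ A.F → A.T q = SubTrans.sub Kind.at A' q' →
      LAMatchRun w A' A'.q0 i .failure s1 →
      LAMatchRun w A q i .failure (.call q i :: s1 ++ [LaRunElem.fail])

/-! ## `Memo-la` -/

/-- Values of the memoization table of `Memo-la`: `Failure` or `Success`. -/
inductive LaVal : Type where
  | success : LaVal
  | failure : LaVal
deriving DecidableEq

/-- Results of `Memo-la`: `SuccessAt i'`, bare `Success`, or `Failure`. -/
inductive LaResult : Type where
  | successAt : ℕ → LaResult
  | success : LaResult
  | failure : LaResult
deriving DecidableEq

def LaVal.toResult : LaVal → LaResult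
  | .success => .success
  | .failure => .failure

def LaResult.elem {S : Type} : LaResult → LaRunElem S
  | .successAt i => .succAt i
  | .success => .succ
  | .failure => .fail

def Result.toLa : Result → LaResult
  | .successAt i => .successAt i
  | .failure => .failure

/-- The final recording of `Memo-la`: `M(q,i) := Success` if the result is
`SuccessAt i'` or `Success`, and `M(q,i) := Failure` if the result is `Failure`. -/
def laRecord [DecidableEq S] (M : S × ℕ → Option LaVal) (q : S) (i : ℕ) (r : LaResult) :
    S × ℕ → Option LaVal :=
  fun p => if p = (q, i) then
    some (match r with | .failure => LaVal.failure | _ => LaVal.success)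
  else M p

/-- Big-step semantics (with resulting memoization table and produced run) of the
memoized backtracking matching algorithm `Memo-la` for la-NFAs:
`MemoLaRun w A q i M M' r s` means the call `Memo-la^M_{A,w}(q, i)` terminates with
result `r`, final memoization table `M'`, and produces the run `s`. The memoization
table is shared between the top-level automaton and all sub-automata. -/
inductive MemoLaRun [DecidableEq S] (w : List Sigma) :
    SubNFA Sigma S → S → ℕ → (S × ℕ → Option LaVal) → (S × ℕ → Option LaVal) →
    LaResult → List (LaRunElem S) → Prop where
  | memoHit {A : SubNFA Sigma S} {q : S} {i : ℕ} {M : S × ℕ → Option LaVal} {v : LaVal} :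
      M (q, i) = some v →
      MemoLaRun w A q i M M v.toResult [.memo q i, v.toResult.elem]
  | accept {A : SubNFA Sigma S} {q : S} {i : ℕ} {M : S × ℕ → Option LaVal} :
      M (q, i) = none → q ∈ A.F →
      MemoLaRun w A q i M (laRecord M q i (.successAt i)) (.successAt i)
        [.call q i, .succAt i]
  | eps {A : SubNFA Sigma S} {q q' : S} {i : ℕ} {M M' : S × ℕ → Option LaVal}
      {r : LaResult} {s : List (LaRunElem S)} :
      M (q, i) = none → q ∉ A.F → A.T q = SubTrans.eps q' →
      MemoLaRun w A q' i M M' r s →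
      MemoLaRun w A q i M (laRecord M' q i r) r (.call q i :: s ++ [r.elem])
  | branchNoFail {A : SubNFA Sigma S} {q q' q'' : S} {i : ℕ}
      {M M' : S × ℕ → Option LaVal} {r : LaResult} {s : List (LaRunElem S)} :
      M (q, i) = none → q ∉ A.F → A.T q = SubTrans.branch q' q'' →
      MemoLaRun w A q' i M M' r s → r ≠ .failure →
      MemoLaRun w A q i M (laRecord M' q i r) r (.call q i :: s ++ [r.elem])
  | branchFail {A : SubNFA Sigma S} {q q' q'' : S} {i : ℕ}
      {M M1 M2 : S × ℕ → Option LaVal} {r : LaResult} {s1 s2 : List (LaRunElem S)} :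
      M (q, i) = none → q ∉ A.F → A.T q = SubTrans.branch q' q'' →
      MemoLaRun w A q' i M M1 .failure s1 →
      MemoLaRun w A q'' i M1 M2 r s2 →
      MemoLaRun w A q i M (laRecord M2 q i r) r (.call q i :: s1 ++ s2 ++ [r.elem])
  | charSucc {A : SubNFA Sigma S} {q q' : S} {σ : Sigma} {i : ℕ}
      {M M' : S × ℕ → Option LaVal} {r : LaResult} {s : List (LaRunElem S)} :
      M (q, i) = none → q ∉ A.F → A.T q = SubTrans.char σ q' →
      w[i]? = some σ →
      MemoLaRun w A q' (i + 1) M M' r s →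
      MemoLaRun w A q i M (laRecord M' q i r) r (.call q i :: s ++ [r.elem])
  | charFail {A : SubNFA Sigma S} {q q' : S} {σ : Sigma} {i : ℕ}
      {M : S × ℕ → Option LaVal} :
      M (q, i) = none → q ∉ A.F → A.T q = SubTrans.char σ q' →
      w[i]? ≠ some σ →
      MemoLaRun w A q i M (laRecord M q i .failure) .failure [.call q i, .fail]
  | plaSucc {A A' : SubNFA Sigma S} {q q' : S} {i : ℕ}
      {M M1 M2 : S × ℕ → Option LaVal} {r1 r : LaResult} {s1 s2 : List (LaRunElem S)} :
      M (q, i) = none → q ∉ A.F → A.T q = SubTrans.sub Kind.pla A' q' →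
      MemoLaRun w A' A'.q0 i M M1 r1 s1 → r1 ≠ .failure →
      MemoLaRun w A q' i M1 M2 r s2 →
      MemoLaRun w A q i M (laRecord M2 q i r) r (.call q i :: s1 ++ s2 ++ [r.elem])
  | plaFail {A A' : SubNFA Sigma S} {q q' : S} {i : ℕ}
      {M M1 : S × ℕ → Option LaVal} {s1 : List (LaRunElem S)} :
      M (q, i) = none → q ∉ A.F → A.T q = SubTrans.sub Kind.pla A' q' →
      MemoLaRun w A' A'.q0 i M M1 .failure s1 →
      MemoLaRun w A q i M (laRecord M1 q i .failure) .failure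
        (.call q i :: s1 ++ [LaRunElem.fail])

/-! ## `Memo-at` -/

/-- Results of `Memo-at`: `SuccessAt(i', K)` with a set `K` of delayed memoization keys,
or `Failure(j)` with a nesting depth `j`. -/
inductive AtResult (S : Type) : Type where
  | successAt : ℕ → Finset (S × ℕ) → AtResult S
  | failure : ℕ → AtResult S

/-- Elements of runs of `Memo-at`: calls `C(q,i)`, memoization-table invocations
`M(q,i)`, and results `S(i')` and `F(j)`. -/
inductive AtRunElem (S : Type) : Type where
  | call : S → ℕ → AtRunElem S
  | memo : S → ℕ → AtRunElem S
  | succ : ℕ → AtRunElem S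
  | fail : ℕ → AtRunElem S
deriving DecidableEq

def AtRunElem.isRet : AtRunElem S → Bool
  | .succ _ => true
  | .fail _ => true
  | _ => false

def AtRunElem.isCall : AtRunElem S → Bool
  | .call _ _ => true
  | .memo _ _ => true
  | _ => false

def atMemoToCall : AtRunElem S → Option (AtRunElem S)
  | .memo q i => some (.call q i)
  | _ => none

def AtResult.elem {S : Type} : AtResult S → AtRunElem S
  | .successAt i _ => .succ i
  | .failure j => .fail j

/-- `f`, converting results of `Memo-at` to results of `Match-(la,at)`. -/
def AtResult.toResult {S : Type} : AtResult S → Result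
  | .successAt i _ => .successAt i
  | .failure _ => .failure

/-- The final step of `Memo-at`: on success, the key `(q,i)` is added to the set of
delayed keys. -/
def atFinal [DecidableEq S] (q : S) (i : ℕ) : AtResult S → AtResult S
  | .successAt i' K => .successAt i' (insert (q, i) K)
  | .failure j => .failure j

/-- The final recording of `Memo-at`: `M(q,i) := Failure(j)` if the result is
`Failure(j)`. -/
def atRecord [DecidableEq S] (M : S × ℕ → Option ℕ) (q : S) (i : ℕ) :
    AtResult S → (S × ℕ → Option ℕ)
  | .failure j => fun p => if p = (q, i) then some j else M p
  | _ => M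

/-- Batch recording `M(k) := Failure(j)` for every `k ∈ K`. -/
def atBatch [DecidableEq S] (M : S × ℕ → Option ℕ) (K : Finset (S × ℕ)) (j : ℕ) :
    S × ℕ → Option ℕ :=
  fun p => if p ∈ K then some j else M p

/-- Big-step semantics (with resulting memoization table and produced run) of the
memoized backtracking matching algorithm `Memo-at` for at-NFAs:
`MemoAtRun A0 w A q i M M' r s` means the call `Memo-at^M_{A0,A,w}(q, i)` (with the
whole automaton `A0` and current sub-automaton `A`) terminates with result `r`, final
memoization table `M'`, and produces the run `s`. -/
inductive MemoAtRun [DecidableEq S] (A0 : SubNFA Sigma S) (w : List Sigma) :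
    SubNFA Sigma S → S → ℕ → (S × ℕ → Option ℕ) → (S × ℕ → Option ℕ) →
    AtResult S → List (AtRunElem S) → Prop where
  | memoHit {A : SubNFA Sigma S} {q : S} {i j : ℕ} {M : S × ℕ → Option ℕ} :
      M (q, i) = some j →
      MemoAtRun A0 w A q i M M (.failure j) [.memo q i, .fail j]
  | accept {A : SubNFA Sigma S} {q : S} {i : ℕ} {M : S × ℕ → Option ℕ} :
      M (q, i) = none → q ∈ A.F →
      MemoAtRun A0 w A q i M M (.successAt i {(q, i)}) [.call q i, .succ i]
  | eps {A : SubNFA Sigma S} {q q' : S} {i : ℕ} {M M' : S × ℕ → Option ℕ}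
      {r : AtResult S} {s : List (AtRunElem S)} :
      M (q, i) = none → q ∉ A.F → A.T q = SubTrans.eps q' →
      MemoAtRun A0 w A q' i M M' r s →
      MemoAtRun A0 w A q i M (atRecord M' q i r) (atFinal q i r)
        (.call q i :: s ++ [r.elem])
  | branchNoBT {A : SubNFA Sigma S} {q q' q'' : S} {i : ℕ} {M M' : S × ℕ → Option ℕ}
      {r : AtResult S} {s : List (AtRunElem S)} :
      M (q, i) = none → q ∉ A.F → A.T q = SubTrans.branch q' q'' →
      MemoAtRun A0 w A q' i M M' r s →
      (∀ j, r = AtResult.failure j → j ≠ A0.nu q) →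
      MemoAtRun A0 w A q i M (atRecord M' q i r) (atFinal q i r)
        (.call q i :: s ++ [r.elem])
  | branchBTSucc {A : SubNFA Sigma S} {q q' q'' : S} {i i'' : ℕ} {K : Finset (S × ℕ)}
      {M M1 M2 : S × ℕ → Option ℕ} {s1 s2 : List (AtRunElem S)} :
      M (q, i) = none → q ∉ A.F → A.T q = SubTrans.branch q' q'' →
      MemoAtRun A0 w A q' i M M1 (.failure (A0.nu q)) s1 →
      MemoAtRun A0 w A q'' i M1 M2 (.successAt i'' K) s2 →
      MemoAtRun A0 w A q i M M2 (atFinal q i (.successAt i'' K))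
        (.call q i :: s1 ++ s2 ++ [AtRunElem.succ i''])
  | branchBTFail {A : SubNFA Sigma S} {q q' q'' : S} {i j' : ℕ}
      {M M1 M2 : S × ℕ → Option ℕ} {s1 s2 : List (AtRunElem S)} :
      M (q, i) = none → q ∉ A.F → A.T q = SubTrans.branch q' q'' →
      MemoAtRun A0 w A q' i M M1 (.failure (A0.nu q)) s1 →
      MemoAtRun A0 w A q'' i M1 M2 (.failure j') s2 →
      MemoAtRun A0 w A q i M (atRecord M2 q i (.failure (min (A0.nu q) j')))
        (.failure (min (A0.nu q) j'))
        (.call q i :: s1 ++ s2 ++ [AtRunElem.fail (min (A0.nu q) j')])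
  | charSucc {A : SubNFA Sigma S} {q q' : S} {σ : Sigma} {i : ℕ}
      {M M' : S × ℕ → Option ℕ} {r : AtResult S} {s : List (AtRunElem S)} :
      M (q, i) = none → q ∉ A.F → A.T q = SubTrans.char σ q' →
      w[i]? = some σ →
      MemoAtRun A0 w A q' (i + 1) M M' r s →
      MemoAtRun A0 w A q i M (atRecord M' q i r) (atFinal q i r)
        (.call q i :: s ++ [r.elem])
  | charFail {A : SubNFA Sigma S} {q q' : S} {σ : Sigma} {i : ℕ}
      {M : S × ℕ → Option ℕ} :
      M (q, i) = none → q ∉ A.F → A.T q = SubTrans.char σ q' →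
      w[i]? ≠ some σ →
      MemoAtRun A0 w A q i M (atRecord M q i (.failure (A0.nu q)))
        (.failure (A0.nu q)) [.call q i, .fail (A0.nu q)]
  | subSuccSucc {A A' : SubNFA Sigma S} {q q' : S} {i i' i'' : ℕ}
      {K' K'' : Finset (S × ℕ)} {M M1 M2 : S × ℕ → Option ℕ}
      {s1 s2 : List (AtRunElem S)} :
      M (q, i) = none → q ∉ A.F → A.T q = SubTrans.sub Kind.at A' q' →
      MemoAtRun A0 w A' A'.q0 i M M1 (.successAt i' K') s1 →
      MemoAtRun A0 w A q' i' M1 M2 (.successAt i'' K'') s2 →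
      MemoAtRun A0 w A q i M M2 (atFinal q i (.successAt i'' (K' ∪ K'')))
        (.call q i :: s1 ++ s2 ++ [AtRunElem.succ i''])
  | subSuccFail {A A' : SubNFA Sigma S} {q q' : S} {i i' j : ℕ} {K' : Finset (S × ℕ)}
      {M M1 M2 : S × ℕ → Option ℕ} {s1 s2 : List (AtRunElem S)} :
      M (q, i) = none → q ∉ A.F → A.T q = SubTrans.sub Kind.at A' q' →
      MemoAtRun A0 w A' A'.q0 i M M1 (.successAt i' K') s1 →
      MemoAtRun A0 w A q' i' M1 M2 (.failure j) s2 →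
      MemoAtRun A0 w A q i M (atRecord (atBatch M2 K' j) q i (.failure j)) (.failure j)
        (.call q i :: s1 ++ s2 ++ [AtRunElem.fail j])
  | subFailHigh {A A' : SubNFA Sigma S} {q q' : S} {i j : ℕ}
      {M M1 : S × ℕ → Option ℕ} {s1 : List (AtRunElem S)} :
      M (q, i) = none → q ∉ A.F → A.T q = SubTrans.sub Kind.at A' q' →
      MemoAtRun A0 w A' A'.q0 i M M1 (.failure j) s1 →
      A0.nu q < j →
      MemoAtRun A0 w A q i M (atRecord M1 q i (.failure (A0.nu q)))
        (.failure (A0.nu q)) (.call q i :: s1 ++ [AtRunElem.fail (A0.nu q)])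
  | subFailLow {A A' : SubNFA Sigma S} {q q' : S} {i j : ℕ}
      {M M1 : S × ℕ → Option ℕ} {s1 : List (AtRunElem S)} :
      M (q, i) = none → q ∉ A.F → A.T q = SubTrans.sub Kind.at A' q' →
      MemoAtRun A0 w A' A'.q0 i M M1 (.failure j) s1 →
      j ≤ A0.nu q →
      MemoAtRun A0 w A q i M (atRecord M1 q i (.failure j)) (.failure j)
        (.call q i :: s1 ++ [AtRunElem.fail j])

/-! ## The combined algorithm `Memo-(la,at)` -/

/-- Values of the memoization table of `Memo-(la,at)`: `Success` or `Failure(j)`. -/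
inductive LaAtVal : Type where
  | success : LaAtVal
  | failure : ℕ → LaAtVal

/-- Results of `Memo-(la,at)`: `SuccessAt(i', K)`, bare `Success`, or `Failure(j)`. -/
inductive LaAtResult (S : Type) : Type where
  | successAt : ℕ → Finset (S × ℕ) → LaAtResult S
  | success : LaAtResult S
  | failure : ℕ → LaAtResult S

def LaAtVal.toResult {S : Type} : LaAtVal → LaAtResult S
  | .success => .success
  | .failure j => .failure j

/-- `f`, converting results of `Memo-(la,at)` to results of `Match-(la,at)`
(undefined on the bare value `Success`). -/
def LaAtResult.toResult? {S : Type} : LaAtResult S → Option Result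
  | .successAt i _ => some (.successAt i)
  | .success => none
  | .failure _ => some .failure

def laAtFinal [DecidableEq S] (q : S) (i : ℕ) : LaAtResult S → LaAtResult S
  | .successAt i' K => .successAt i' (insert (q, i) K)
  | r => r

def laAtRecord [DecidableEq S] (M : S × ℕ → Option LaAtVal) (q : S) (i : ℕ) :
    LaAtResult S → (S × ℕ → Option LaAtVal)
  | .successAt _ _ => M
  | .success => fun p => if p = (q, i) then some LaAtVal.success else M p
  | .failure j => fun p => if p = (q, i) then some (LaAtVal.failure j) else M p

def laAtBatch [DecidableEq S] (M : S × ℕ → Option LaAtVal) (K : Finset (S × ℕ))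
    (v : LaAtVal) : S × ℕ → Option LaAtVal :=
  fun p => if p ∈ K then some v else M p

/-- Big-step semantics (with resulting memoization table and the number of recursive
calls made) of the combined memoized backtracking matching algorithm `Memo-(la,at)`:
`MemoLaAtRun w A0 A q i M M' r n` means the call `Memo-(la,at)^M_{A0,A,w}(q, i)`
terminates with result `r`, final memoization table `M'`, making `n` calls in total.
On a positive look-ahead transition, the sub-automaton becomes the new whole automaton
(so nesting depths of atomic grouping are reset by look-around operators). -/
inductive MemoLaAtRun [DecidableEq S] (w : List Sigma) :
    SubNFA Sigma S → SubNFA Sigma S → S → ℕ →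
    (S × ℕ → Option LaAtVal) → (S × ℕ → Option LaAtVal) → LaAtResult S → ℕ → Prop where
  | memoHit {A0 A : SubNFA Sigma S} {q : S} {i : ℕ} {M : S × ℕ → Option LaAtVal}
      {v : LaAtVal} :
      M (q, i) = some v →
      MemoLaAtRun w A0 A q i M M v.toResult 1
  | accept {A0 A : SubNFA Sigma S} {q : S} {i : ℕ} {M : S × ℕ → Option LaAtVal} :
      M (q, i) = none → q ∈ A.F →
      MemoLaAtRun w A0 A q i M M (.successAt i {(q, i)}) 1
  | eps {A0 A : SubNFA Sigma S} {q q' : S} {i : ℕ} {M M' : S × ℕ → Option LaAtVal}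
      {r : LaAtResult S} {n : ℕ} :
      M (q, i) = none → q ∉ A.F → A.T q = SubTrans.eps q' →
      MemoLaAtRun w A0 A q' i M M' r n →
      MemoLaAtRun w A0 A q i M (laAtRecord M' q i (laAtFinal q i r)) (laAtFinal q i r)
        (n + 1)
  | branchNoBT {A0 A : SubNFA Sigma S} {q q' q'' : S} {i : ℕ}
      {M M' : S × ℕ → Option LaAtVal} {r : LaAtResult S} {n : ℕ} :
      M (q, i) = none → q ∉ A.F → A.T q = SubTrans.branch q' q'' →
      MemoLaAtRun w A0 A q' i M M' r n →
      (∀ j, r = LaAtResult.failure j → j ≠ A0.nu q) →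
      MemoLaAtRun w A0 A q i M (laAtRecord M' q i (laAtFinal q i r)) (laAtFinal q i r)
        (n + 1)
  | branchBTFail {A0 A : SubNFA Sigma S} {q q' q'' : S} {i j' : ℕ}
      {M M1 M2 : S × ℕ → Option LaAtVal} {n1 n2 : ℕ} :
      M (q, i) = none → q ∉ A.F → A.T q = SubTrans.branch q' q'' →
      MemoLaAtRun w A0 A q' i M M1 (.failure (A0.nu q)) n1 →
      MemoLaAtRun w A0 A q'' i M1 M2 (.failure j') n2 →
      MemoLaAtRun w A0 A q i M
        (laAtRecord M2 q i (.failure (min (A0.nu q) j')))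
        (.failure (min (A0.nu q) j')) (n1 + n2 + 1)
  | branchBTOther {A0 A : SubNFA Sigma S} {q q' q'' : S} {i : ℕ}
      {M M1 M2 : S × ℕ → Option LaAtVal} {r : LaAtResult S} {n1 n2 : ℕ} :
      M (q, i) = none → q ∉ A.F → A.T q = SubTrans.branch q' q'' →
      MemoLaAtRun w A0 A q' i M M1 (.failure (A0.nu q)) n1 →
      MemoLaAtRun w A0 A q'' i M1 M2 r n2 →
      (∀ j, r ≠ LaAtResult.failure j) →
      MemoLaAtRun w A0 A q i M (laAtRecord M2 q i (laAtFinal q i r)) (laAtFinal q i r)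
        (n1 + n2 + 1)
  | charSucc {A0 A : SubNFA Sigma S} {q q' : S} {σ : Sigma} {i : ℕ}
      {M M' : S × ℕ → Option LaAtVal} {r : LaAtResult S} {n : ℕ} :
      M (q, i) = none → q ∉ A.F → A.T q = SubTrans.char σ q' →
      w[i]? = some σ →
      MemoLaAtRun w A0 A q' (i + 1) M M' r n →
      MemoLaAtRun w A0 A q i M (laAtRecord M' q i (laAtFinal q i r)) (laAtFinal q i r)
        (n + 1)
  | charFail {A0 A : SubNFA Sigma S} {q q' : S} {σ : Sigma} {i : ℕ}
      {M : S × ℕ → Option LaAtVal} :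
      M (q, i) = none → q ∉ A.F → A.T q = SubTrans.char σ q' →
      w[i]? ≠ some σ →
      MemoLaAtRun w A0 A q i M (laAtRecord M q i (.failure (A0.nu q)))
        (.failure (A0.nu q)) 1
  | plaSuccAt {A0 A A' : SubNFA Sigma S} {q q' : S} {i i' : ℕ} {K' : Finset (S × ℕ)}
      {M M1 M2 : S × ℕ → Option LaAtVal} {r : LaAtResult S} {n1 n2 : ℕ} :
      M (q, i) = none → q ∉ A.F → A.T q = SubTrans.sub Kind.pla A' q' →
      MemoLaAtRun w A' A' A'.q0 i M M1 (.successAt i' K') n1 →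
      MemoLaAtRun w A0 A q' i (laAtBatch M1 K' LaAtVal.success) M2 r n2 →
      MemoLaAtRun w A0 A q i M (laAtRecord M2 q i (laAtFinal q i r)) (laAtFinal q i r)
        (n1 + n2 + 1)
  | plaBare {A0 A A' : SubNFA Sigma S} {q q' : S} {i : ℕ}
      {M M1 M2 : S × ℕ → Option LaAtVal} {r : LaAtResult S} {n1 n2 : ℕ} :
      M (q, i) = none → q ∉ A.F → A.T q = SubTrans.sub Kind.pla A' q' →
      MemoLaAtRun w A' A' A'.q0 i M M1 .success n1 →
      MemoLaAtRun w A0 A q' i M1 M2 r n2 →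
      MemoLaAtRun w A0 A q i M (laAtRecord M2 q i (laAtFinal q i r)) (laAtFinal q i r)
        (n1 + n2 + 1)
  | plaFail {A0 A A' : SubNFA Sigma S} {q q' : S} {i j : ℕ}
      {M M1 : S × ℕ → Option LaAtVal} {n1 : ℕ} :
      M (q, i) = none → q ∉ A.F → A.T q = SubTrans.sub Kind.pla A' q' →
      MemoLaAtRun w A' A' A'.q0 i M M1 (.failure j) n1 →
      MemoLaAtRun w A0 A q i M (laAtRecord M1 q i (.failure (A0.nu q)))
        (.failure (A0.nu q)) (n1 + 1)
  | atSuccSucc {A0 A A' : SubNFA Sigma S} {q q' : S} {i i' i'' : ℕ}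
      {K' K'' : Finset (S × ℕ)} {M M1 M2 : S × ℕ → Option LaAtVal} {n1 n2 : ℕ} :
      M (q, i) = none → q ∉ A.F → A.T q = SubTrans.sub Kind.at A' q' →
      MemoLaAtRun w A0 A' A'.q0 i M M1 (.successAt i' K') n1 →
      MemoLaAtRun w A0 A q' i' M1 M2 (.successAt i'' K'') n2 →
      MemoLaAtRun w A0 A q i M M2
        (laAtFinal q i (.successAt i'' (K' ∪ K''))) (n1 + n2 + 1)
  | atSuccBare {A0 A A' : SubNFA Sigma S} {q q' : S} {i i' : ℕ} {K' : Finset (S × ℕ)}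
      {M M1 M2 : S × ℕ → Option LaAtVal} {n1 n2 : ℕ} :
      M (q, i) = none → q ∉ A.F → A.T q = SubTrans.sub Kind.at A' q' →
      MemoLaAtRun w A0 A' A'.q0 i M M1 (.successAt i' K') n1 →
      MemoLaAtRun w A0 A q' i' M1 M2 .success n2 →
      MemoLaAtRun w A0 A q i M
        (laAtRecord (laAtBatch M2 K' LaAtVal.success) q i .success) .success
        (n1 + n2 + 1)
  | atSuccFail {A0 A A' : SubNFA Sigma S} {q q' : S} {i i' j : ℕ} {K' : Finset (S × ℕ)}
      {M M1 M2 : S × ℕ → Option LaAtVal} {n1 n2 : ℕ} :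
      M (q, i) = none → q ∉ A.F → A.T q = SubTrans.sub Kind.at A' q' →
      MemoLaAtRun w A0 A' A'.q0 i M M1 (.successAt i' K') n1 →
      MemoLaAtRun w A0 A q' i' M1 M2 (.failure j) n2 →
      MemoLaAtRun w A0 A q i M
        (laAtRecord (laAtBatch M2 K' (LaAtVal.failure j)) q i (.failure j))
        (.failure j) (n1 + n2 + 1)
  | atBare {A0 A A' : SubNFA Sigma S} {q q' : S} {i : ℕ}
      {M M1 : S × ℕ → Option LaAtVal} {n1 : ℕ} :
      M (q, i) = none → q ∉ A.F → A.T q = SubTrans.sub Kind.at A' q' →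
      MemoLaAtRun w A0 A' A'.q0 i M M1 .success n1 →
      MemoLaAtRun w A0 A q i M (laAtRecord M1 q i .success) .success (n1 + 1)
  | atFailHigh {A0 A A' : SubNFA Sigma S} {q q' : S} {i j : ℕ}
      {M M1 : S × ℕ → Option LaAtVal} {n1 : ℕ} :
      M (q, i) = none → q ∉ A.F → A.T q = SubTrans.sub Kind.at A' q' →
      MemoLaAtRun w A0 A' A'.q0 i M M1 (.failure j) n1 →
      A0.nu q < j →
      MemoLaAtRun w A0 A q i M (laAtRecord M1 q i (.failure (A0.nu q)))
        (.failure (A0.nu q)) (n1 + 1)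
  | atFailLow {A0 A A' : SubNFA Sigma S} {q q' : S} {i j : ℕ}
      {M M1 : S × ℕ → Option LaAtVal} {n1 : ℕ} :
      M (q, i) = none → q ∉ A.F → A.T q = SubTrans.sub Kind.at A' q' →
      MemoLaAtRun w A0 A' A'.q0 i M M1 (.failure j) n1 →
      j ≤ A0.nu q →
      MemoLaAtRun w A0 A q i M (laAtRecord M1 q i (.failure j)) (.failure j) (n1 + 1)



theorem Result.elem_ne_call {S : Type} (r : Result) (q : S) (i : ℕ) :
    r.elem ≠ RunElem.call q i := by cases r <;> simp [Result.elem]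

theorem Result.elem_ne_memo {S : Type} (r : Result) (q : S) (i : ℕ) :
    r.elem ≠ RunElem.memo q i := by cases r <;> simp [Result.elem]

theorem recFail_mono {S : Type} [DecidableEq S] {M : S × ℕ → Bool} {q : S} {i : ℕ}
    {r : Result} {p : S × ℕ} (h : M p = true) : recFail M q i r p = true := by
  cases r <;> simp [recFail, h]

theorem recFail_inv {S : Type} [DecidableEq S] {M : S × ℕ → Bool} {q : S} {i : ℕ}
    {r : Result} {p : S × ℕ} (h : recFail M q i r p = true) : p = (q, i) ∨ M p = true := by
  cases r
  · exact Or.inr h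
  · simp only [recFail] at h
    by_cases hp : p = (q, i)
    · exact Or.inl hp
    · exact Or.inr (by simpa [hp] using h)

theorem recFail_self {S : Type} [DecidableEq S] {M : S × ℕ → Bool} {q : S} {i : ℕ} :
    recFail M q i .failure (q, i) = true := by
  simp [recFail]

/-- Table invariants of a run. -/
theorem MemoRun.table {Sigma S : Type} [DecidableEq S] {A : NFA Sigma S} {w : List Sigma}
    {q : S} {i : ℕ} {M M' : S × ℕ → Bool} {r : Result} {s : List (RunElem S)}
    (h : MemoRun A w q i M M' r s) :
    (∀ p, M p = true → M' p = true) ∧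
    (∀ p : S × ℕ, RunElem.call p.1 p.2 ∈ s → M p = false) ∧
    (r = .failure → ∀ p : S × ℕ, RunElem.call p.1 p.2 ∈ s → M' p = true) ∧
    (∀ p : S × ℕ, M' p = true → M p = true ∨ RunElem.call p.1 p.2 ∈ s) ∧
    (∀ p : S × ℕ, RunElem.memo p.1 p.2 ∈ s → M p = true ∨ RunElem.call p.1 p.2 ∈ s) := by
  induction h with
  | memoHit h =>
    refine ⟨fun _ h => h, ?_, ?_, fun _ h => Or.inl h, ?_⟩
    · simp
    · simp
    · rintro ⟨a, b⟩ hp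
      simp at hp
      obtain ⟨rfl, rfl⟩ := hp
      exact Or.inl h
  | accept h hF =>
    refine ⟨fun _ h => h, ?_, by simp, fun _ h => Or.inl h, by simp⟩
    rintro ⟨a, b⟩ hp
    simp at hp
    obtain ⟨rfl, rfl⟩ := hp
    exact h
  | charFail h hF hT hw =>
    refine ⟨fun _ h => recFail_mono h, ?_, ?_, ?_, by simp⟩
    · rintro ⟨a, b⟩ hp
      simp at hp
      obtain ⟨rfl, rfl⟩ := hp
      exact h
    · rintro - ⟨a, b⟩ hp
      simp at hp
      obtain ⟨rfl, rfl⟩ := hp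
      exact recFail_self
    · rintro ⟨a, b⟩ hp
      rcases recFail_inv hp with h | h
      · simp at h; simp [h]
      · exact Or.inl h
  | branchSucc h hF hT h1 ih =>
    obtain ⟨a1, a2, a3, a4, a5⟩ := ih
    refine ⟨a1, ?_, by simp, ?_, ?_⟩
    · rintro ⟨a, b⟩ hp
      simp at hp
      rcases hp with ⟨rfl, rfl⟩ | hp
      · exact h
      · exact a2 (a, b) hp
    · rintro ⟨a, b⟩ hp
      rcases a4 _ hp with h | h
      · exact Or.inl h
      · right; simp at h ⊢; exact Or.inr h
    · rintro ⟨a, b⟩ hp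
      simp at hp
      rcases a5 (a, b) hp with h | h
      · exact Or.inl h
      · right; simp at h ⊢; exact Or.inr h
  | eps h hF hT h1 ih | charSucc h hF hT hw h1 ih =>
    obtain ⟨a1, a2, a3, a4, a5⟩ := ih
    refine ⟨fun p hp => recFail_mono (a1 p hp), ?_, ?_, ?_, ?_⟩
    · rintro ⟨a, b⟩ hp
      simp [(Result.elem_ne_call _ _ _).symm] at hp
      rcases hp with ⟨rfl, rfl⟩ | hp
      · exact h
      · exact a2 (a, b) hp
    · rintro rfl ⟨a, b⟩ hp
      simp [(Result.elem_ne_call _ _ _).symm] at hp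
      rcases hp with ⟨rfl, rfl⟩ | hp
      · exact recFail_self
      · exact recFail_mono (a3 rfl (a, b) hp)
    · rintro ⟨a, b⟩ hp
      rcases recFail_inv hp with h | h
      · simp at h; simp [h]
      rcases a4 _ h with h | h
      · exact Or.inl h
      · right; simp at h ⊢; exact Or.inr (Or.inl h)
    · rintro ⟨a, b⟩ hp
      simp [(Result.elem_ne_memo _ _ _).symm] at hp
      rcases a5 (a, b) hp with h | h
      · exact Or.inl h
      · right; simp at h ⊢; exact Or.inr (Or.inl h)
  | branchFail h hF hT h1 h2 ih ih' =>
    obtain ⟨a1, a2, a3, a4, a5⟩ := ih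
    obtain ⟨b1, b2, b3, b4, b5⟩ := ih'
    refine ⟨fun p hp => recFail_mono (b1 p (a1 p hp)), ?_, ?_, ?_, ?_⟩
    · rintro ⟨a, b⟩ hp
      simp [(Result.elem_ne_call _ _ _).symm] at hp
      rcases hp with ⟨rfl, rfl⟩ | hp | hp
      · exact h
      · exact a2 (a, b) hp
      · have := b2 (a, b) hp
        by_contra hc
        have := a1 (a, b) (by simpa using hc)
        simp_all
    · rintro rfl ⟨a, b⟩ hp
      simp [(Result.elem_ne_call _ _ _).symm] at hp
      rcases hp with ⟨rfl, rfl⟩ | hp | hp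
      · exact recFail_self
      · exact recFail_mono (b1 _ (a3 rfl (a, b) hp))
      · exact recFail_mono (b3 rfl (a, b) hp)
    · rintro ⟨a, b⟩ hp
      rcases recFail_inv hp with h | h
      · simp at h; simp [h]
      rcases b4 _ h with h | h
      · rcases a4 _ h with h | h
        · exact Or.inl h
        · right; simp at h ⊢; exact Or.inr (Or.inl h)
      · right; simp at h ⊢; exact Or.inr (Or.inr (Or.inl h))
    · rintro ⟨a, b⟩ hp
      simp [(Result.elem_ne_memo _ _ _).symm] at hp
      rcases hp with hp | hp
      · rcases a5 (a, b) hp with h | h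
        · exact Or.inl h
        · right; simp at h ⊢; exact Or.inr (Or.inl h)
      · rcases b5 (a, b) hp with h | h
        · rcases a4 _ h with h | h
          · exact Or.inl h
          · right; simp at h ⊢; exact Or.inr (Or.inl h)
        · right; simp at h ⊢; exact Or.inr (Or.inr (Or.inl h))

/-- Calls of a run are at later positions, or reachable by ε-steps. -/
theorem MemoRun.reach {Sigma S : Type} [DecidableEq S] {A : NFA Sigma S} {w : List Sigma}
    {q : S} {i : ℕ} {M M' : S × ℕ → Bool} {r : Result} {s : List (RunElem S)}
    (h : MemoRun A w q i M M' r s) :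
    ∀ a b, RunElem.call a b ∈ s →
      i < b ∨ (b = i ∧ Relation.ReflTransGen A.epsStep q a) := by
  induction h with
  | memoHit h => simp
  | accept h hF | charFail h hF hT hw =>
    intro a b hp
    simp at hp
    obtain ⟨rfl, rfl⟩ := hp
    exact Or.inr ⟨rfl, .refl⟩
  | branchSucc h hF hT h1 ih =>
    intro a b hp
    simp at hp
    rcases hp with ⟨rfl, rfl⟩ | hp
    · exact Or.inr ⟨rfl, .refl⟩
    · exact (ih a b hp).imp id
        fun ⟨x, y⟩ => ⟨x, .head ⟨hF, Or.inr (Or.inl ⟨_, hT⟩)⟩ y⟩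
  | eps h hF hT h1 ih =>
    intro a b hp
    simp [(Result.elem_ne_call _ _ _).symm] at hp
    rcases hp with ⟨rfl, rfl⟩ | hp
    · exact Or.inr ⟨rfl, .refl⟩
    · exact (ih a b hp).imp id fun ⟨x, y⟩ => ⟨x, .head ⟨hF, Or.inl hT⟩ y⟩
  | charSucc h hF hT hw h1 ih =>
    intro a b hp
    simp [(Result.elem_ne_call _ _ _).symm] at hp
    rcases hp with ⟨rfl, rfl⟩ | hp
    · exact Or.inr ⟨rfl, .refl⟩
    · left
      rcases ih a b hp with h | h <;> omega
  | branchFail h hF hT h1 h2 ih ih' =>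
    intro a b hp
    simp [(Result.elem_ne_call _ _ _).symm] at hp
    rcases hp with ⟨rfl, rfl⟩ | hp | hp
    · exact Or.inr ⟨rfl, .refl⟩
    · exact (ih a b hp).imp id
        fun ⟨x, y⟩ => ⟨x, .head ⟨hF, Or.inr (Or.inl ⟨_, hT⟩)⟩ y⟩
    · exact (ih' a b hp).imp id
        fun ⟨x, y⟩ => ⟨x, .head ⟨hF, Or.inr (Or.inr ⟨_, hT⟩)⟩ y⟩

/-- A sub-run started after an ε-step from `q` does not call `(q, i)` again. -/
theorem MemoRun.not_call_eps {Sigma S : Type} [DecidableEq S] {A : NFA Sigma S}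
    (hL : A.NoEpsLoops) {w : List Sigma}
    {q q' : S} {i : ℕ} {M M' : S × ℕ → Bool} {r : Result} {s : List (RunElem S)}
    (h : MemoRun A w q' i M M' r s) (he : A.epsStep q q') : RunElem.call q i ∉ s := by
  intro hc
  rcases h.reach q i hc with h | ⟨-, h⟩
  · omega
  · exact hL q (Relation.TransGen.head' he h)

/-- Every call occurs at most once. -/
theorem MemoRun.call_count {Sigma S : Type} [DecidableEq S] {A : NFA Sigma S}
    (hL : A.NoEpsLoops) {w : List Sigma}
    {q : S} {i : ℕ} {M M' : S × ℕ → Bool} {r : Result} {s : List (RunElem S)}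
    (h : MemoRun A w q i M M' r s) (a : S) (b : ℕ) :
    s.count (RunElem.call a b) ≤ 1 := by
  induction h with
  | memoHit h => simp
  | @accept q i _ h hF | @charFail q _ _ i _ h hF hT hw =>
    simp only [List.count_cons, List.count_nil]
    simp
    split <;> simp
  | @branchSucc q _ _ i _ _ _ _ h hF hT h1 ih =>
    simp only [List.cons_append, List.count_cons, List.count_append, List.count_nil]
    have := h1.not_call_eps hL ⟨hF, Or.inr (Or.inl ⟨_, hT⟩)⟩
    by_cases hab : q = a ∧ i = b
    · obtain ⟨rfl, rfl⟩ := hab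
      simp [List.count_eq_zero.2 this]
    · simp [hab, ih]
  | @eps q _ i _ _ _ _ h hF hT h1 ih =>
    simp only [List.cons_append, List.count_cons, List.count_append, List.count_nil]
    have := h1.not_call_eps hL ⟨hF, Or.inl hT⟩
    by_cases hab : q = a ∧ i = b
    · obtain ⟨rfl, rfl⟩ := hab
      simp [List.count_eq_zero.2 this, Result.elem_ne_call]
    · simp [hab, ih, Result.elem_ne_call]
  | @charSucc q _ _ i _ _ _ _ h hF hT hw h1 ih =>
    simp only [List.cons_append, List.count_cons, List.count_append, List.count_nil]
    have : RunElem.call q i ∉ _ := fun hc => by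
      rcases h1.reach q i hc with h | ⟨h, -⟩ <;> omega
    by_cases hab : q = a ∧ i = b
    · obtain ⟨rfl, rfl⟩ := hab
      simp [List.count_eq_zero.2 this, Result.elem_ne_call]
    · simp [hab, ih, Result.elem_ne_call]
  | @branchFail q _ _ i _ _ _ _ s s' h hF hT h1 h2 ih ih' =>
    simp only [List.cons_append, List.count_cons, List.count_append, List.count_nil]
    have n1 := h1.not_call_eps hL ⟨hF, Or.inr (Or.inl ⟨_, hT⟩)⟩
    have n2 := h2.not_call_eps hL ⟨hF, Or.inr (Or.inr ⟨_, hT⟩)⟩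
    by_cases hab : q = a ∧ i = b
    · obtain ⟨rfl, rfl⟩ := hab
      simp [List.count_eq_zero.2 n1, List.count_eq_zero.2 n2, Result.elem_ne_call]
    · by_cases hs : RunElem.call a b ∈ s
      · have m := h1.table.2.2.1 rfl (a, b) hs
        have : RunElem.call a b ∉ s' := fun hc => by
          have := h2.table.2.1 (a, b) hc
          simp_all
        simp [hab, ih, List.count_eq_zero.2 this, Result.elem_ne_call]
      · simp [hab, ih', List.count_eq_zero.2 hs, Result.elem_ne_call]

open Classical in
/-- The number of slots of the transition of `q'` leading to `q`. -/
noncomputable def NFA.slots {Sigma S : Type} (A : NFA Sigma S) (q q' : S) : ℕ :=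
  (if q' ∉ A.F ∧ A.T q' = Trans.eps q then 1 else 0) +
  (if q' ∉ A.F ∧ ∃ σ, A.T q' = Trans.char σ q then 1 else 0) +
  (if q' ∉ A.F ∧ ∃ q'', A.T q' = Trans.branch q q'' then 1 else 0) +
  (if q' ∉ A.F ∧ ∃ q'', A.T q' = Trans.branch q'' q then 1 else 0)

/-- The position from which `q'` can reach position `i` in one transition. -/
def NFA.srcPos {Sigma S : Type} (A : NFA Sigma S) (i : ℕ) (q' : S) : ℕ :=
  match A.T q' with
  | .char _ _ => i - 1
  | _ => i

theorem NFA.inDeg_eq {Sigma S : Type} [Fintype S] (A : NFA Sigma S) (q : S) [Decidable (q = A.q0)] :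
    A.inDeg q = (∑ q', A.slots q q') + (if q = A.q0 then 1 else 0) := by
  unfold NFA.inDeg NFA.slots
  simp only [Finset.card_filter, Finset.sum_add_distrib]
  congr! 5

/-- Number of slots leading to `(q, i)` of all the calls in `s`. -/
noncomputable def NFA.pot {Sigma S : Type} [Fintype S] [DecidableEq S] (A : NFA Sigma S)
    (q : S) (i : ℕ) (s : List (RunElem S)) : ℕ :=
  ∑ q', A.slots q q' * s.count (RunElem.call q' (A.srcPos i q'))

theorem NFA.pot_append {Sigma S : Type} [Fintype S] [DecidableEq S] (A : NFA Sigma S)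
    (q : S) (i : ℕ) (s t : List (RunElem S)) :
    A.pot q i (s ++ t) = A.pot q i s + A.pot q i t := by
  simp [NFA.pot, List.count_append, mul_add, Finset.sum_add_distrib]

theorem NFA.pot_cons {Sigma S : Type} [Fintype S] [DecidableEq S] (A : NFA Sigma S)
    (q : S) (i : ℕ) (x : RunElem S) (t : List (RunElem S)) :
    A.pot q i (x :: t) = A.pot q i [x] + A.pot q i t :=
  A.pot_append q i [x] t

theorem NFA.slots_le_pot {Sigma S : Type} [Fintype S] [DecidableEq S] (A : NFA Sigma S)
    (q : S) (i : ℕ) (q' : S) (j : ℕ) (hj : A.srcPos i q' = j) :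
    A.slots q q' ≤ A.pot q i [RunElem.call q' j] := by
  unfold NFA.pot
  refine le_trans ?_ (Finset.single_le_sum (fun _ _ => Nat.zero_le _) (Finset.mem_univ q'))
  simp [hj]

/-- Invocations of `(a, b)` are bounded by the slots leading to it. -/
theorem MemoRun.inv_count {Sigma S : Type} [Fintype S] [DecidableEq S] {A : NFA Sigma S}
    {w : List Sigma}
    {q : S} {i : ℕ} {M M' : S × ℕ → Bool} {r : Result} {s : List (RunElem S)}
    (h : MemoRun A w q i M M' r s) (a : S) (b : ℕ) :
    s.count (RunElem.call a b) + s.count (RunElem.memo a b) ≤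
      (if q = a ∧ i = b then 1 else 0) + A.pot a b s := by
  induction h with
  | memoHit h | accept h hF | charFail h hF hT hw =>
    refine le_trans ?_ (Nat.le_add_right _ _)
    simp [List.count_cons]
  | @branchSucc q q1 q2 i _ _ _ _ h hF hT h1 ih =>
    rw [List.cons_append, A.pot_cons, A.pot_append]
    have key : (if q1 = a ∧ i = b then 1 else 0) ≤ A.pot a b [RunElem.call q i] := by
      split
      · rename_i hab
        obtain ⟨rfl, rfl⟩ := hab
        refine le_trans ?_ (A.slots_le_pot q1 i q i (by simp [NFA.srcPos, hT]))
        simp [NFA.slots, hF, hT]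
      · simp
    simp [List.count_cons]
    omega
  | @eps q q1 i _ _ _ _ h hF hT h1 ih =>
    rw [List.cons_append, A.pot_cons, A.pot_append]
    have key : (if q1 = a ∧ i = b then 1 else 0) ≤ A.pot a b [RunElem.call q i] := by
      split
      · rename_i hab
        obtain ⟨rfl, rfl⟩ := hab
        refine le_trans ?_ (A.slots_le_pot q1 i q i (by simp [NFA.srcPos, hT]))
        simp [NFA.slots, hF, hT]
      · simp
    simp [List.count_cons, Result.elem_ne_call, Result.elem_ne_memo]
    omega
  | @charSucc q q1 _ i _ _ _ _ h hF hT hw h1 ih =>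
    rw [List.cons_append, A.pot_cons, A.pot_append]
    have key : (if q1 = a ∧ i + 1 = b then 1 else 0) ≤ A.pot a b [RunElem.call q i] := by
      split
      · rename_i hab
        obtain ⟨rfl, rfl⟩ := hab
        refine le_trans ?_ (A.slots_le_pot q1 (i + 1) q i (by simp [NFA.srcPos, hT]))
        simp [NFA.slots, hF, hT]
      · simp
    simp [List.count_cons, Result.elem_ne_call, Result.elem_ne_memo]
    omega
  | @branchFail q q1 q2 i _ _ _ _ s s' h hF hT h1 h2 ih ih' =>
    rw [List.cons_append, List.cons_append, A.pot_cons, A.pot_append, A.pot_append]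
    have key : (if q1 = a ∧ i = b then 1 else 0) + (if q2 = a ∧ i = b then 1 else 0)
        ≤ A.pot a b [RunElem.call q i] := by
      by_cases hb : i = b
      · subst hb
        refine le_trans ?_ (A.slots_le_pot a i q i (by simp [NFA.srcPos, hT]))
        simp [NFA.slots, hF, hT]
      · simp [hb]
    simp [List.count_cons, Result.elem_ne_call, Result.elem_ne_memo]
    omega

/-- **Lemma 5** (memoization-table lookups are bounded by in-degree for `Memo`):
for every run `s` of an execution of `Memo`, every state `q ∈ Q`, and every position
`i ∈ {0, …, |w|}`, the element `M(q, i)` appears at most `#in(q) − 1` times in `s`. -/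
theorem memo_lookup_bound {Sigma S : Type} [Fintype S] [DecidableEq S]
    (A : NFA Sigma S) (hLoop : A.NoEpsLoops)
    (w : List Sigma) (i0 : ℕ) (hi0 : i0 ≤ w.length)
    {M' : S × ℕ → Bool} {r : Result} {s : List (RunElem S)}
    (hrun : MemoRun A w A.q0 i0 (fun _ => false) M' r s)
    (q : S) (i : ℕ) (hi : i ≤ w.length) :
    s.count (RunElem.memo q i) ≤ A.inDeg q - 1 := by
  have h1 := hrun.inv_count q i
  have h2 : A.pot q i s ≤ ∑ q', A.slots q q' := by
    unfold NFA.pot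
    refine Finset.sum_le_sum fun q' _ => ?_
    exact le_trans (Nat.mul_le_mul_left _ (hrun.call_count hLoop _ _)) (by simp)
  have h3 := A.inDeg_eq q
  have h4 : (if A.q0 = q ∧ i0 = i then 1 else 0) ≤ (if q = A.q0 then 1 else 0) := by
    split
    · rename_i h
      simp [h.1]
    · simp
  by_cases hm : RunElem.memo q i ∈ s
  · have h5 : RunElem.call q i ∈ s := by
      rcases hrun.table.2.2.2.2 (q, i) hm with h | h
      · simp at h
      · exact h
    have h6 := List.count_pos_iff.2 h5
    omega
  · rw [List.count_eq_zero.2 hm]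
    exact Nat.zero_le _

end RegexMemo
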